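/- Let θ > 0, A ∈ ℝ^{d×d}, B ∈ ℝ^{d×m}, C ∈ ℝ^{k×d}, σ ∈ ℝ^{d×n}, and let R ∈ ℝ^{m×m} be symmetric positive definite. Let S : [0,T] → ℝ^{d×d} be a continuously differentiable symmetric-positive-definite-matrix-valued function satisfying (d/dt)S_t = A S_t + S_t Aᵀ + θ S_t CᵀC S_t − (1/θ)(B R⁻¹ Bᵀ − θ σσᵀ). Let ρ(t,z) := (2π)^{−d/2} (det S_t)^{−1/2} exp(−½ zᵀ S_t⁻¹ z) be the density of N(0, S_t). Then for all t ∈ [0,T] and z ∈ ℝ^d, ∂ρ/∂t (t,z) = −∇_z·( ρ(t,·) ( A(·) + (θ/2) S_t CᵀC (·) + σσᵀ S_t⁻¹ (·) ) )(z) − ½ tr( ((1/θ) B R⁻¹ Bᵀ + σσᵀ) ∇_z²ρ(t,z) ), where A(·), (θ/2)S_tCᵀC(·), σσᵀS_t⁻¹(·) denote the linear vector fields z ↦ Az, z ↦ (θ/2)S_tCᵀCz, z ↦ σσᵀS_t⁻¹z. -/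

import Mathlib

open Matrix

/-- Partial derivative in direction `i`. -/
noncomputable def pd {d : ℕ} (i : Fin d) (f : (Fin d → ℝ) → ℝ) (x : Fin d → ℝ) : ℝ :=
  fderiv ℝ f x (Pi.single i 1)

/-- Spatial gradient. -/
noncomputable def grad {d : ℕ} (f : (Fin d → ℝ) → ℝ) (x : Fin d → ℝ) : Fin d → ℝ :=
  fun i => pd i f x

/-- Spatial Hessian as a matrix. -/
noncomputable def hess {d : ℕ} (f : (Fin d → ℝ) → ℝ) (x : Fin d → ℝ) :
    Matrix (Fin d) (Fin d) ℝ :=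
  Matrix.of fun i j => pd i (fun y => pd j f y) x

/-- Divergence of a vector field. -/
noncomputable def dvg {d : ℕ} (v : (Fin d → ℝ) → (Fin d → ℝ)) (x : Fin d → ℝ) : ℝ :=
  ∑ i, pd i (fun y => v y i) x

/-!
The density `ρ` of `N(0, S)` satisfies `∂ρ/∂S = ½ ∇²ρ`, so along a curve `S_t` its time derivative
is `½ tr(S' ∇²ρ)`. Transport by a linear field `F` has the same form, namely
`-∇·(ρ F z) = ½ tr((F S + S Fᵀ) ∇²ρ)`. A Fokker–Planck equation with drift `F` and diffusion
`D` is therefore solved by `ρ` as soon as `S' = F S + S Fᵀ + D`. For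
`F = A + (θ/2) S CᵀC + σσᵀ S⁻¹` and `D = -(θ⁻¹ B R⁻¹ Bᵀ + σσᵀ)`, the terms of `F S + S Fᵀ` are
`A S + S Aᵀ + θ S CᵀC S + 2 σσᵀ`, and this is the given Riccati equation.
-/

section MatrixCalculus

variable {𝕜 ι κ : Type*} [NontriviallyNormedField 𝕜]

theorem hasDerivAt_matrix_iff [Finite κ] {M : 𝕜 → Matrix ι κ 𝕜} {M' : Matrix ι κ 𝕜} {t : 𝕜} :
    HasDerivAt M M' t ↔ ∀ i j, HasDerivAt (fun s => M s i j) (M' i j) t := by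
  have := Fintype.ofFinite κ
  exact hasDerivAt_pi.trans (forall_congr' fun _ => hasDerivAt_pi)

variable [Fintype ι]

theorem hasDerivAt_dotProduct_mulVec [Fintype κ] {M : 𝕜 → Matrix ι κ 𝕜} {M' : Matrix ι κ 𝕜}
    {t : 𝕜} (hM : HasDerivAt M M' t) (x : ι → 𝕜) (y : κ → 𝕜) :
    HasDerivAt (fun s => x ⬝ᵥ M s *ᵥ y) (x ⬝ᵥ M' *ᵥ y) t := by
  simp only [mulVec, dotProduct]
  exact HasDerivAt.fun_sum fun i _ => .const_mul _ <|
    .fun_sum fun j _ => (hasDerivAt_matrix_iff.1 hM i j).mul_const _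

theorem differentiable_mulVec [CompleteSpace 𝕜] [Finite κ] (M : Matrix κ ι 𝕜) :
    Differentiable 𝕜 (M *ᵥ ·) := by
  have := Fintype.ofFinite κ
  exact (LinearMap.toContinuousLinearMap M.mulVecLin).differentiable

theorem hasFDerivAt_dotProduct_mulVec_self [CompleteSpace 𝕜] (M : Matrix ι ι 𝕜)
    (x : ι → 𝕜) :
    HasFDerivAt (fun y => y ⬝ᵥ M *ᵥ y)
      (LinearMap.toContinuousLinearMap (dotProductBilin 𝕜 𝕜 ((M + Mᵀ) *ᵥ x))) x := by
  classical
  let B := LinearMap.toContinuousBilinearMap (toLinearMap₂' (S₁ := 𝕜) (S₂ := 𝕜) 𝕜 M)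
  have hB : ∀ v w, B v w = v ⬝ᵥ M *ᵥ w := toLinearMap₂'_apply' M
  have hder := B.hasFDerivAt_of_bilinear (hasFDerivAt_id x) (hasFDerivAt_id x)
  simp only [hB, id] at hder
  refine hder.congr_fderiv (ContinuousLinearMap.ext fun v => ?_)
  simp [hB, add_mulVec, mulVec_transpose, ← dotProduct_mulVec, dotProduct_comm v, add_comm]

theorem sum_det_updateRow_eq_trace_adjugate_mul [DecidableEq ι] {R : Type*} [CommRing R]
    (M N : Matrix ι ι R) :
    ∑ i, (M.updateRow i (N i)).det = (M.adjugate * N).trace := by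
  rw [trace_mul_comm]
  refine Finset.sum_congr rfl fun i _ => ?_
  rw [← cramer_transpose_apply, cramer_eq_adjugate_mulVec, ← adjugate_transpose,
    mulVec_transpose]
  rfl

variable [DecidableEq ι] {M : 𝕜 → Matrix ι ι 𝕜} {M' : Matrix ι ι 𝕜} {t : 𝕜}

theorem hasDerivAt_det (hM : HasDerivAt M M' t) :
    HasDerivAt (fun s => (M s).det) ((M t).adjugate * M').trace t := by
  let detRows : ContinuousMultilinearMap 𝕜 (fun _ : ι => ι → 𝕜) 𝕜 :=
    ⟨(detRowAlternating (R := 𝕜) (n := ι)).toMultilinearMap, Continuous.matrix_det continuous_id⟩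
  have hder := (detRows.hasFDerivAt (M t)).comp_hasDerivAt t hM
  rw [← sum_det_updateRow_eq_trace_adjugate_mul]
  exact hder.congr_deriv (detRows.linearDeriv_apply (M t) M')

open scoped Matrix.Norms.Operator in
theorem hasDerivAt_matrix_inv [CompleteSpace 𝕜] (hM : HasDerivAt M M' t) (hu : IsUnit (M t)) :
    HasDerivAt (fun s => (M s)⁻¹) (-((M t)⁻¹ * M' * (M t)⁻¹)) t := by
  -- Completeness for the operator norm: instance search only tries the entrywise uniformity.
  have : @CompleteSpace (Matrix ι ι 𝕜) PseudoMetricSpace.toUniformSpace :=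
    FiniteDimensional.complete 𝕜 _
  obtain ⟨u, hu⟩ := hu
  have hinv := hasFDerivAt_ringInverse (𝕜 := 𝕜) u
  rw [coe_units_inv, hu] at hinv
  have hcomp := hinv.comp_hasDerivAt t hM
  simp only [Function.comp_def, ← nonsing_inv_eq_ringInverse] at hcomp
  exact hcomp

end MatrixCalculus

section SpatialCalculus

variable {d : ℕ} {f g : (Fin d → ℝ) → ℝ} {v : (Fin d → ℝ) → Fin d → ℝ} {x : Fin d → ℝ}

theorem pd_mul (hf : DifferentiableAt ℝ f x) (hg : DifferentiableAt ℝ g x) (i : Fin d) :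
    pd i (fun y => f y * g y) x = pd i f x * g x + f x * pd i g x := by
  simp only [pd, fderiv_fun_mul hf hg, _root_.add_apply, _root_.smul_apply, smul_eq_mul]
  ring

theorem dvg_smul (hf : DifferentiableAt ℝ f x) (hv : DifferentiableAt ℝ v x) :
    dvg (fun y => f y • v y) x = grad f x ⬝ᵥ v x + f x * dvg v x := by
  simp only [dvg, Pi.smul_apply, smul_eq_mul, pd_mul hf (differentiableAt_pi.1 hv _),
    Finset.sum_add_distrib, Finset.mul_sum, dotProduct, grad]

theorem pd_mulVec {ι : Type*} (M : Matrix ι (Fin d) ℝ) (i : Fin d) (j : ι) (x : Fin d → ℝ) :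
    pd i (fun y => (M *ᵥ y) j) x = M j i := by
  let L := LinearMap.toContinuousLinearMap (LinearMap.proj j ∘ₗ M.mulVecLin)
  have hL : HasFDerivAt (fun y => (M *ᵥ y) j) L x := L.hasFDerivAt
  simp [pd, hL.fderiv, L]

theorem dvg_mulVec (M : Matrix (Fin d) (Fin d) ℝ) (x : Fin d → ℝ) :
    dvg (M *ᵥ ·) x = M.trace :=
  Finset.sum_congr rfl fun i _ => pd_mulVec M i i x

end SpatialCalculus

section Gaussian

variable {d : ℕ}

/-- The Lebesgue density of the centred normal distribution `N(0, S)` on `ℝᵈ`. It is a genuine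
density only for positive definite `S`, since `S⁻¹` and the power of `S.det` are total functions. -/
noncomputable def centeredGaussianPDF (S : Matrix (Fin d) (Fin d) ℝ) (z : Fin d → ℝ) : ℝ :=
  (2 * Real.pi) ^ (-(d : ℝ) / 2) * S.det ^ (-(1 : ℝ) / 2) *
    Real.exp (-(1 / 2) * (z ⬝ᵥ S⁻¹ *ᵥ z))

variable {S : Matrix (Fin d) (Fin d) ℝ}

theorem hasFDerivAt_centeredGaussianPDF (hS : S.IsSymm) (z : Fin d → ℝ) :
    HasFDerivAt (centeredGaussianPDF S)
      (-centeredGaussianPDF S z •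
        LinearMap.toContinuousLinearMap (dotProductBilin ℝ ℝ (S⁻¹ *ᵥ z))) z := by
  have hexp := ((hasFDerivAt_dotProduct_mulVec_self S⁻¹ z).const_mul (-(1 / 2))).exp.const_mul
    ((2 * Real.pi) ^ (-(d : ℝ) / 2) * S.det ^ (-(1 : ℝ) / 2))
  refine hexp.congr_fderiv ?_
  ext1 v
  simp only [centeredGaussianPDF, one_div, neg_mul, hS.inv.eq, add_mulVec, map_add, smul_add,
    neg_smul, smul_neg, _root_.add_apply, _root_.neg_apply, _root_.smul_apply,
    LinearMap.coe_toContinuousLinearMap', dotProductBilin_apply_apply, smul_eq_mul]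
  ring

theorem grad_centeredGaussianPDF (hS : S.IsSymm) (z : Fin d → ℝ) :
    grad (centeredGaussianPDF S) z = -centeredGaussianPDF S z • S⁻¹ *ᵥ z := by
  funext i
  simp [grad, pd, (hasFDerivAt_centeredGaussianPDF hS z).fderiv]

theorem hess_centeredGaussianPDF (hS : S.IsSymm) (z : Fin d → ℝ) :
    hess (centeredGaussianPDF S) z =
      centeredGaussianPDF S z • (vecMulVec (S⁻¹ *ᵥ z) (S⁻¹ *ᵥ z) - S⁻¹) := by
  ext i j
  have hgrad (y : Fin d → ℝ) : pd j (centeredGaussianPDF S) y =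
      centeredGaussianPDF S y * (-S⁻¹ *ᵥ y) j := by
    simpa [grad, neg_mulVec] using congrFun (grad_centeredGaussianPDF hS y) j
  have hpd : pd i (centeredGaussianPDF S) z = -centeredGaussianPDF S z * (S⁻¹ *ᵥ z) i :=
    congrFun (grad_centeredGaussianPDF hS z) i
  simp only [hess, of_apply, hgrad]
  rw [pd_mul (hasFDerivAt_centeredGaussianPDF hS z).differentiableAt
    (differentiableAt_pi.1 (differentiable_mulVec _ z) j), pd_mulVec, hpd]
  simp only [neg_mulVec, Matrix.neg_apply, Pi.neg_apply, Matrix.smul_apply, Matrix.sub_apply,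
    vecMulVec_apply, hS.inv.apply i j, smul_eq_mul]
  ring

theorem trace_mul_hess_centeredGaussianPDF (hS : S.IsSymm) (D : Matrix (Fin d) (Fin d) ℝ)
    (z : Fin d → ℝ) :
    (D * hess (centeredGaussianPDF S) z).trace =
      centeredGaussianPDF S z * (S⁻¹ *ᵥ z ⬝ᵥ D *ᵥ S⁻¹ *ᵥ z - (D * S⁻¹).trace) := by
  rw [hess_centeredGaussianPDF hS, Matrix.mul_smul, trace_smul, Matrix.mul_sub, trace_sub,
    mul_vecMulVec, trace_vecMulVec, smul_eq_mul, dotProduct_comm]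

theorem isSymm_hess_centeredGaussianPDF (hS : S.IsSymm) (z : Fin d → ℝ) :
    (hess (centeredGaussianPDF S) z).IsSymm := by
  simp [hess_centeredGaussianPDF hS, IsSymm, transpose_vecMulVec, hS.inv.eq]

theorem dvg_centeredGaussianPDF_smul_mulVec (hS : S.IsSymm) (hu : IsUnit S)
    (F : Matrix (Fin d) (Fin d) ℝ) (z : Fin d → ℝ) :
    dvg (fun y => centeredGaussianPDF S y • F *ᵥ y) z =
      -(1 / 2) * ((F * S + S * Fᵀ) * hess (centeredGaussianPDF S) z).trace := by
  have hdet : IsUnit S.det := (isUnit_iff_isUnit_det S).1 hu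
  have htr : ((S * Fᵀ) * hess (centeredGaussianPDF S) z).trace =
      ((F * S) * hess (centeredGaussianPDF S) z).trace := by
    rw [← trace_transpose, transpose_mul, (isSymm_hess_centeredGaussianPDF hS z).eq,
      transpose_mul, transpose_transpose, hS.eq, trace_mul_comm]
  rw [dvg_smul (hasFDerivAt_centeredGaussianPDF hS z).differentiableAt (differentiable_mulVec F z),
    grad_centeredGaussianPDF hS, dvg_mulVec, Matrix.add_mul, trace_add, htr,
    trace_mul_hess_centeredGaussianPDF hS, mul_nonsing_inv_cancel_right _ _ hdet, ← mulVec_mulVec,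
    mulVec_mulVec z S, mul_nonsing_inv _ hdet, one_mulVec, smul_dotProduct, smul_eq_mul]
  ring

end Gaussian

section GaussianCurve

variable {d : ℕ} {S : ℝ → Matrix (Fin d) (Fin d) ℝ} {S' : Matrix (Fin d) (Fin d) ℝ} {t : ℝ}

theorem hasDerivAt_centeredGaussianPDF (hpd : (S t).PosDef) (hS : HasDerivAt S S' t)
    (z : Fin d → ℝ) :
    HasDerivAt (fun s => centeredGaussianPDF (S s) z)
      (1 / 2 * (S' * hess (centeredGaussianPDF (S t)) z).trace) t := by
  have hdet : (S t).det ≠ 0 := hpd.det_pos.ne'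
  have hsymm : (S t).IsSymm := isHermitian_iff_isSymm.1 hpd.isHermitian
  have hpow := (hasDerivAt_det hS).rpow_const (p := -(1 : ℝ) / 2) (.inl hdet)
  have hquad := hasDerivAt_dotProduct_mulVec (hasDerivAt_matrix_inv hS hpd.isUnit) z z
  have hadj : ((S t).adjugate * S').trace = (S t).det * (S' * (S t)⁻¹).trace := by
    rw [trace_mul_comm, inv_def, Matrix.mul_smul, trace_smul, Ring.inverse_eq_inv', smul_eq_mul,
      mul_inv_cancel_left₀ hdet]
  have hscore : z ⬝ᵥ (-((S t)⁻¹ * S' * (S t)⁻¹)) *ᵥ z =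
      -((S t)⁻¹ *ᵥ z ⬝ᵥ S' *ᵥ (S t)⁻¹ *ᵥ z) := by
    rw [neg_mulVec, dotProduct_neg, ← mulVec_mulVec, ← mulVec_mulVec, dotProduct_mulVec z,
      ← mulVec_transpose, hsymm.inv.eq]
  refine ((hpow.const_mul _).fun_mul (hquad.const_mul (-(1 / 2))).exp).congr_deriv ?_
  rw [trace_mul_hess_centeredGaussianPDF hsymm, centeredGaussianPDF, hadj, hscore,
    Real.rpow_sub_one hdet]
  field_simp
  ring

theorem hasDerivAt_centeredGaussianPDF_of_lyapunov {F D : Matrix (Fin d) (Fin d) ℝ}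
    (hpd : (S t).PosDef) (hS : HasDerivAt S (F * S t + S t * Fᵀ + D) t) (z : Fin d → ℝ) :
    HasDerivAt (fun s => centeredGaussianPDF (S s) z)
      (-dvg (fun y => centeredGaussianPDF (S t) y • F *ᵥ y) z
        + 1 / 2 * (D * hess (centeredGaussianPDF (S t)) z).trace) t := by
  refine (hasDerivAt_centeredGaussianPDF hpd hS z).congr_deriv ?_
  rw [dvg_centeredGaussianPDF_smul_mulVec (isHermitian_iff_isSymm.1 hpd.isHermitian) hpd.isUnit,
    Matrix.add_mul _ D, trace_add]
  ring

end GaussianCurve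

theorem leqg_pos_mean_field_fokker_planck_general {d : ℕ} {θ : ℝ} (hθ : θ ≠ 0)
    {A G V W : Matrix (Fin d) (Fin d) ℝ} (hV : V.IsSymm) (hW : W.IsSymm)
    {S : ℝ → Matrix (Fin d) (Fin d) ℝ} {S' : Matrix (Fin d) (Fin d) ℝ} {t : ℝ}
    (hpd : (S t).PosDef) (hS : HasDerivAt S S' t)
    (hric : S' = A * S t + S t * Aᵀ + θ • (S t * W * S t) - θ⁻¹ • (G - θ • V))
    (z : Fin d → ℝ) :
    HasDerivAt (fun s => centeredGaussianPDF (S s) z)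
      (-dvg (fun y => centeredGaussianPDF (S t) y •
          (A *ᵥ y + (θ / 2) • (S t * W) *ᵥ y + (V * (S t)⁻¹) *ᵥ y)) z
        - 1 / 2 * ((θ⁻¹ • G + V) * hess (centeredGaussianPDF (S t)) z).trace) t := by
  set F := A + (θ / 2) • (S t * W) + V * (S t)⁻¹ with hF
  have hsymm : (S t)ᵀ = S t := (isHermitian_iff_isSymm.1 hpd.isHermitian).eq
  have hdet : IsUnit (S t).det := hpd.det_pos.ne'.isUnit
  have hdrift : F * S t = A * S t + (θ / 2) • (S t * W * S t) + V := by
    rw [hF, Matrix.add_mul, Matrix.add_mul, Matrix.smul_mul, nonsing_inv_mul_cancel_right _ _ hdet]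
  have hdrift_transpose : S t * Fᵀ = S t * Aᵀ + (θ / 2) • (S t * W * S t) + V := by
    simpa [transpose_mul, hsymm, hV.eq, hW.eq, Matrix.mul_assoc] using congrArg transpose hdrift
  have hlyapunov : S' = F * S t + S t * Fᵀ + -(θ⁻¹ • G + V) := by
    rw [hric, hdrift, hdrift_transpose, smul_sub, inv_smul_smul₀ hθ]
    module
  have hfield (y : Fin d → ℝ) :
      A *ᵥ y + (θ / 2) • (S t * W) *ᵥ y + (V * (S t)⁻¹) *ᵥ y = F *ᵥ y := by
    rw [hF, add_mulVec, add_mulVec, smul_mulVec]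
  simp only [hfield]
  rw [hlyapunov] at hS
  refine (hasDerivAt_centeredGaussianPDF_of_lyapunov hpd hS z).congr_deriv ?_
  rw [Matrix.neg_mul, trace_neg, mul_neg, sub_eq_add_neg]

/-- Fokker-Planck equation of the dual-EnKF mean-field process in the
LEQG (risk-averse, θ > 0) case: drift `Az`, interaction `(θ/2) S_t CᵀC z`, correction
`σσᵀ S_t⁻¹ z`, diffusion `(1/θ) BR⁻¹Bᵀ + σσᵀ`. -/
theorem leqg_pos_mean_field_fokker_planck
    (d m k n : ℕ) (T : ℝ) (hT : 0 < T)
    (θ : ℝ) (hθ : 0 < θ)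
    (A : Matrix (Fin d) (Fin d) ℝ) (B : Matrix (Fin d) (Fin m) ℝ)
    (C : Matrix (Fin k) (Fin d) ℝ) (σ : Matrix (Fin d) (Fin n) ℝ)
    (R : Matrix (Fin m) (Fin m) ℝ) (hR : R.PosDef)
    (S S' : ℝ → Matrix (Fin d) (Fin d) ℝ)
    (hSpd : ∀ t ∈ Set.Icc (0 : ℝ) T, (S t).PosDef)
    (hS : ∀ t ∈ Set.Icc (0 : ℝ) T, ∀ i j, HasDerivAt (fun s => S s i j) (S' t i j) t)
    (hS'cont : ∀ i j, ContinuousOn (fun t => S' t i j) (Set.Icc (0 : ℝ) T))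
    (hric : ∀ t ∈ Set.Icc (0 : ℝ) T,
      S' t = A * S t + S t * Aᵀ + θ • (S t * (Cᵀ * C) * S t)
        - θ⁻¹ • (B * R⁻¹ * Bᵀ - θ • (σ * σᵀ)))
    (ρ : ℝ → (Fin d → ℝ) → ℝ)
    (hρ : ∀ t z, ρ t z =
      (2 * Real.pi) ^ (-(d : ℝ) / 2) * (S t).det ^ (-(1 : ℝ) / 2) *
        Real.exp (-(1 / 2) * (z ⬝ᵥ (S t)⁻¹.mulVec z))) :
    ∀ t ∈ Set.Icc (0 : ℝ) T, ∀ z,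
      deriv (fun s => ρ s z) t =
        -(dvg (fun y => ρ t y •
            (A.mulVec y + (θ / 2) • ((S t * (Cᵀ * C)).mulVec y)
              + (σ * σᵀ * (S t)⁻¹).mulVec y)) z)
        - (1 / 2) * ((θ⁻¹ • (B * R⁻¹ * Bᵀ) + σ * σᵀ) * hess (ρ t) z).trace := by
  obtain rfl : ρ = fun t => centeredGaussianPDF (S t) := funext₂ hρ
  intro t ht z
  have hder : HasDerivAt S (S' t) t := hasDerivAt_matrix_iff.2 (hS t ht)
  have hσ : (σ * σᵀ).IsSymm := by simp [IsSymm]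
  have hC : (Cᵀ * C).IsSymm := by simp [IsSymm]
  exact (leqg_pos_mean_field_fokker_planck_general hθ.ne' hσ hC (hSpd t ht) hder
    (hric t ht) z).deriv
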